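/- Let G be a doubly regular tournament on v = 4m−1 vertices (m ≥ 1) containing a transitive subtournament of size s, and let ε = √(1+12m) − ⌊√(1+12m)⌋. If ε ≠ 0 and −1 + ⌊√(1+12m)⌋ is odd, then s ≤ −2 + ⌊√(1+12m)⌋. -/

import Mathlib

open Matrix Finset

/-- A digraph on `v` vertices, given by its adjacency matrix: entries in `{0,1}`, zero diagonal. -/
def IsDigraph {v : ℕ} (A : Matrix (Fin v) (Fin v) ℂ) : Prop :=
  (∀ x y, A x y = 0 ∨ A x y = 1) ∧ ∀ x, A x x = 0

/-- A tournament: a digraph with `A + Aᵀ = J - I`. -/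
def IsTournament {v : ℕ} (A : Matrix (Fin v) (Fin v) ℂ) : Prop :=
  IsDigraph A ∧ A + Aᵀ = Matrix.of (fun _ _ => 1) - 1

/-- A doubly regular tournament: every vertex dominates exactly `(v-1)/2` vertices and every
pair of distinct vertices jointly dominates exactly `(v-3)/4` vertices (so `v ≡ 3 (mod 4)`). -/
def IsDRT {v : ℕ} (A : Matrix (Fin v) (Fin v) ℂ) : Prop :=
  IsTournament A ∧ v % 4 = 3 ∧
  (∀ x, (univ.filter fun y => A x y = 1).card = (v - 1) / 2) ∧
  (∀ x y, x ≠ y → (univ.filter fun z => A x z = 1 ∧ A y z = 1).card = (v - 3) / 4)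

/-- `T` is a transitive subtournament of the digraph with adjacency matrix `A`. -/
def IsTransSubtournament {v : ℕ} (A : Matrix (Fin v) (Fin v) ℂ) (T : Finset (Fin v)) : Prop :=
  (∀ x ∈ T, ∀ y ∈ T, x ≠ y → Xor' (A x y = 1) (A y x = 1)) ∧
  (∀ x ∈ T, ∀ y ∈ T, ∀ z ∈ T, A x y = 1 → A y z = 1 → A x z = 1)

/-!
Give the ordered pair `(x, z)` the sign `+1` if `x` dominates `z` and `-1` otherwise. In a doubly
regular tournament on `v` vertices the rows of this sign matrix have squared norm `v` and pairwise
inner product `-1`, so the sum of the rows indexed by a set `T` of size `s` has squared norm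
`s (v + 1 - s)`. If `T` is transitive, the coordinates of this row sum on `T` itself are, up to
order, the numbers `2 i - s` with `i < s`, whose squares add up to `(s³ + 2 s) / 3`. The remaining
coordinates thus contribute `s (3 (v + 1) - (s + 1) (s + 2)) / 3`. This is nonnegative, and since
every coordinate has the parity of `s`, it is at least `v - s` when `s` is odd.
-/

lemma three_mul_sum_range_two_mul_sub_sq {R : Type*} [CommRing R] (n : ℕ) (a : R) :
    3 * ∑ i ∈ range n, (2 * (i : R) - a) ^ 2 =
      2 * n * (n - 1) * (2 * n - 1) - 6 * a * n * (n - 1) + 3 * n * a ^ 2 := by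
  induction n with
  | zero => simp
  | succ n ih =>
    rw [sum_range_succ, mul_add, ih]
    push_cast
    ring

section

variable {v : ℕ} {A : Matrix (Fin v) (Fin v) ℂ} {T : Finset (Fin v)} {x y z : Fin v}

/-- The in-neighbours of `z` that lie in `T`. -/
noncomputable def dominators (A : Matrix (Fin v) (Fin v) ℂ) (T : Finset (Fin v)) (z : Fin v) :
    Finset (Fin v) :=
  {x ∈ T | A x z = 1}

/-- The `±1` version of the adjacency matrix, with `-1` on the diagonal of a digraph. -/
noncomputable def dominanceSign (A : Matrix (Fin v) (Fin v) ℂ) (x z : Fin v) : ℤ :=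
  if A x z = 1 then 1 else -1

/-- The number of vertices of `T` dominating `z` minus the number of those that do not; `z` itself
is counted among the latter if it belongs to `T`. -/
noncomputable def imbalance (A : Matrix (Fin v) (Fin v) ℂ) (T : Finset (Fin v)) (z : Fin v) : ℤ :=
  ∑ x ∈ T, dominanceSign A x z

lemma dominanceSign_eq_two_mul_ite_sub_one (A : Matrix (Fin v) (Fin v) ℂ) (x z : Fin v) :
    dominanceSign A x z = 2 * (if A x z = 1 then 1 else 0) - 1 := by
  unfold dominanceSign
  split_ifs <;> rfl

lemma dominanceSign_mul_self (A : Matrix (Fin v) (Fin v) ℂ) (x z : Fin v) :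
    dominanceSign A x z * dominanceSign A x z = 1 := by
  unfold dominanceSign
  split_ifs <;> rfl

lemma imbalance_eq_two_mul_card_dominators_sub (A : Matrix (Fin v) (Fin v) ℂ)
    (T : Finset (Fin v)) (z : Fin v) :
    imbalance A T z = 2 * #(dominators A T z) - #T := by
  simp only [imbalance, dominators, dominanceSign_eq_two_mul_ite_sub_one, sum_sub_distrib,
    ← mul_sum, sum_boole, sum_const, nsmul_eq_mul, mul_one]

lemma imbalance_ne_zero_of_odd_card (A : Matrix (Fin v) (Fin v) ℂ) (hT : Odd #T) (z : Fin v) :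
    imbalance A T z ≠ 0 := by
  rw [imbalance_eq_two_mul_card_dominators_sub]
  obtain ⟨k, hk⟩ := hT
  omega

lemma card_compl_le_sum_imbalance_sq (A : Matrix (Fin v) (Fin v) ℂ) (hT : Odd #T) :
    (#Tᶜ : ℤ) ≤ ∑ z ∈ Tᶜ, imbalance A T z ^ 2 := by
  have one_le_sq (z : Fin v) : 1 ≤ imbalance A T z ^ 2 :=
    Int.add_one_le_of_lt (sq_pos_of_ne_zero (imbalance_ne_zero_of_odd_card A hT z))
  simpa using card_nsmul_le_sum Tᶜ (fun z => imbalance A T z ^ 2) 1 fun z _ => one_le_sq z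

lemma card_dominators_lt_card (hA : IsDigraph A) (hz : z ∈ T) : #(dominators A T z) < #T :=
  card_lt_card (filter_ssubset.2 ⟨z, hz, by simp [hA.2 z]⟩)

namespace IsTransSubtournament

lemma card_dominators_lt_card_dominators (hT : IsTransSubtournament A T) (hA : IsDigraph A)
    (hx : x ∈ T) (hy : y ∈ T) (hxy : A x y = 1) :
    #(dominators A T x) < #(dominators A T y) := by
  refine card_lt_card ((ssubset_iff_of_subset fun w hw => ?_).2 ⟨x, ?_, ?_⟩)
  · obtain ⟨hwT, hwx⟩ := mem_filter.1 hw
    exact mem_filter.2 ⟨hwT, hT.2 w hwT x hx y hy hwx hxy⟩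
  · exact mem_filter.2 ⟨hx, hxy⟩
  · simp [dominators, hA.2 x]

lemma injOn_card_dominators (hT : IsTransSubtournament A T) (hA : IsDigraph A) :
    Set.InjOn (fun z => #(dominators A T z)) T := by
  intro x hx y hy hcard
  by_contra hne
  rcases hT.1 x hx y hy hne with ⟨hxy, -⟩ | ⟨hyx, -⟩
  · exact (hT.card_dominators_lt_card_dominators hA hx hy hxy).ne hcard
  · exact (hT.card_dominators_lt_card_dominators hA hy hx hyx).ne' hcard

lemma image_card_dominators (hT : IsTransSubtournament A T) (hA : IsDigraph A) :
    T.image (fun z => #(dominators A T z)) = range #T := by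
  refine eq_of_subset_of_card_le (image_subset_iff.2 fun z hz => ?_) ?_
  · exact mem_range.2 (card_dominators_lt_card hA hz)
  · rw [card_image_of_injOn (hT.injOn_card_dominators hA), card_range]

lemma three_mul_sum_imbalance_sq (hT : IsTransSubtournament A T) (hA : IsDigraph A) :
    3 * ∑ z ∈ T, imbalance A T z ^ 2 = (#T : ℤ) ^ 3 + 2 * #T := by
  have sum_eq_sum_range :
      ∑ z ∈ T, imbalance A T z ^ 2 = ∑ i ∈ range #T, (2 * (i : ℤ) - #T) ^ 2 := by
    rw [← hT.image_card_dominators hA, sum_image (hT.injOn_card_dominators hA)]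
    simp only [imbalance_eq_two_mul_card_dominators_sub]
  rw [sum_eq_sum_range, three_mul_sum_range_two_mul_sub_sq]
  ring

end IsTransSubtournament

namespace IsDRT

lemma sum_dominanceSign_mul_of_ne (hA : IsDRT A) (hxy : x ≠ y) :
    ∑ z, dominanceSign A x z * dominanceSign A y z = -1 := by
  obtain ⟨-, hv, houtdegree, hjoint⟩ := hA
  have product_eq (z : Fin v) : dominanceSign A x z * dominanceSign A y z =
      4 * (if A x z = 1 ∧ A y z = 1 then 1 else 0) - 2 * (if A x z = 1 then 1 else 0)
        - 2 * (if A y z = 1 then 1 else 0) + 1 := by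
    by_cases hx : A x z = 1 <;> by_cases hy : A y z = 1 <;> simp [dominanceSign, hx, hy]
  simp only [product_eq, sum_add_distrib, sum_sub_distrib, ← mul_sum, sum_boole, houtdegree,
    hjoint x y hxy, sum_const, card_univ, Fintype.card_fin, nsmul_eq_mul, mul_one]
  omega

lemma sum_dominanceSign_mul (hA : IsDRT A) (x y : Fin v) :
    ∑ z, dominanceSign A x z * dominanceSign A y z = (if x = y then (v : ℤ) + 1 else 0) - 1 := by
  split_ifs with hxy
  · subst hxy
    simp [dominanceSign_mul_self]
  · simpa using hA.sum_dominanceSign_mul_of_ne hxy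

lemma sum_imbalance_sq (hA : IsDRT A) (T : Finset (Fin v)) :
    ∑ z, imbalance A T z ^ 2 = #T * ((v : ℤ) + 1 - #T) := by
  calc ∑ z, imbalance A T z ^ 2
      = ∑ x ∈ T, ∑ y ∈ T, ∑ z, dominanceSign A x z * dominanceSign A y z := by
        simp only [imbalance, sq, sum_mul_sum]
        rw [sum_comm]
        exact sum_congr rfl fun x _ => sum_comm
    _ = ∑ x ∈ T, ((v : ℤ) + 1 - #T) :=
        sum_congr rfl fun x hx => by simp [hA.sum_dominanceSign_mul, hx]
    _ = #T * ((v : ℤ) + 1 - #T) := by rw [sum_const, nsmul_eq_mul]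

lemma three_mul_sum_compl_imbalance_sq (hA : IsDRT A) (hT : IsTransSubtournament A T) :
    3 * ∑ z ∈ Tᶜ, imbalance A T z ^ 2 = #T * (3 * ((v : ℤ) + 1) - (#T + 1) * (#T + 2)) := by
  have sum_split := sum_add_sum_compl T fun z => imbalance A T z ^ 2
  rw [hA.sum_imbalance_sq T] at sum_split
  linear_combination 3 * sum_split - hT.three_mul_sum_imbalance_sq hA.1.1

theorem card_add_one_mul_card_add_two_le (hA : IsDRT A) (hT : IsTransSubtournament A T) :
    (#T + 1) * (#T + 2) ≤ 3 * (v + 1) := by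
  rcases T.eq_empty_or_nonempty with rfl | hne
  · rw [card_empty]
    omega
  have product_nonneg : 0 ≤ #T * (3 * ((v : ℤ) + 1) - (#T + 1) * (#T + 2)) := by
    rw [← hA.three_mul_sum_compl_imbalance_sq hT]
    positivity
  have card_pos : (0 : ℤ) < #T := by exact_mod_cast hne.card_pos
  exact_mod_cast sub_nonneg.1 (nonneg_of_mul_nonneg_right product_nonneg card_pos)

theorem card_add_one_mul_card_add_three_le (hA : IsDRT A) (hT : IsTransSubtournament A T)
    (hodd : Odd #T) : (#T + 1) * (#T + 3) ≤ 3 * (v + 1) := by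
  have card_compl_add : (#Tᶜ : ℤ) + #T = v := by
    exact_mod_cast (card_compl_add_card T).trans (Fintype.card_fin v)
  have product_nonneg : 0 ≤ ((#T : ℤ) - 1) * (3 * ((v : ℤ) + 1) - (#T + 1) * (#T + 3)) := by
    linarith [card_compl_le_sum_imbalance_sq A hodd, hA.three_mul_sum_compl_imbalance_sq hT]
  have one_le_card : 1 ≤ #T := hodd.pos
  rcases one_le_card.eq_or_lt with card_eq_one | one_lt_card
  · have := hA.2.1
    rw [← card_eq_one]
    omega
  · have card_sub_one_pos : (0 : ℤ) < #T - 1 := sub_pos.2 (by exact_mod_cast one_lt_card)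
    exact_mod_cast sub_nonneg.1 (nonneg_of_mul_nonneg_right product_nonneg card_sub_one_pos)

end IsDRT

end

/-- If a doubly regular tournament on `v = 4m-1` vertices contains a transitive
subtournament of size `s`, `√(1+12m)` is not an integer and `-1 + ⌊√(1+12m)⌋` is odd,
then `s ≤ -2 + ⌊√(1+12m)⌋`. -/
theorem drt_bound_odd_case
    {m s : ℕ} (hm : 1 ≤ m)
    (A : Matrix (Fin (4 * m - 1)) (Fin (4 * m - 1)) ℂ) (hA : IsDRT A)
    (T : Finset (Fin (4 * m - 1))) (hT : IsTransSubtournament A T) (hTcard : T.card = s)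
    (heps : Real.sqrt (1 + 12 * (m : ℝ)) - (⌊Real.sqrt (1 + 12 * (m : ℝ))⌋ : ℝ) ≠ 0)
    (hodd : Odd (-1 + ⌊Real.sqrt (1 + 12 * (m : ℝ))⌋)) :
    (s : ℝ) ≤ -2 + (⌊Real.sqrt (1 + 12 * (m : ℝ))⌋ : ℝ) := by
  have floor_eq : ⌊Real.sqrt (1 + 12 * (m : ℝ))⌋ = (Nat.sqrt (1 + 12 * m) : ℤ) := by
    exact_mod_cast Real.floor_real_sqrt_eq_nat_sqrt (a := 1 + 12 * m)
  have order_eq : 3 * (4 * m - 1 + 1) = 12 * m := by omega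
  rw [floor_eq] at hodd ⊢
  suffices s + 2 ≤ Nat.sqrt (1 + 12 * m) by
    have : (s : ℝ) + 2 ≤ Nat.sqrt (1 + 12 * m) := by exact_mod_cast this
    push_cast
    linarith
  rcases Nat.even_or_odd s with hs | hs
  · have bound := hA.card_add_one_mul_card_add_two_le hT
    rw [hTcard, order_eq] at bound
    have : s + 1 ≤ Nat.sqrt (1 + 12 * m) := Nat.le_sqrt'.2 (by linarith)
    have : s + 1 ≠ Nat.sqrt (1 + 12 * m) := by
      obtain ⟨k, hk⟩ := hodd
      obtain ⟨l, hl⟩ := hs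
      omega
    omega
  · have bound := hA.card_add_one_mul_card_add_three_le hT (hTcard ▸ hs)
    rw [hTcard, order_eq] at bound
    exact Nat.le_sqrt'.2 (by linarith)
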